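/- Let E, H be complex Hilbert spaces and G₀, D₀, G, D as in the standing setup. Let M ⊆ D(G) × D(D) and let A ⊆ (E ⊕ H) ⊕ (E ⊕ H) be the relation A := {((u,w),(Dw,Gu)) : (u,w) ∈ M}, i.e. the restriction of the block operator matrix (0 D; G 0) to the domain M. Then A is maximal monotone if and only if there exists a maximal monotone relation h ⊆ BD(G) ⊕ BD(G) such that M = {(u,w) ∈ D(G) × D(D) : (π_{BD(G)}u, Ḋπ_{BD(D)}w) ∈ h}. -/

import Mathlib

open scoped ComplexInnerProductSpace
open Filter Topology Classical

noncomputable section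

variable {E H : Type*}
  [NormedAddCommGroup E] [InnerProductSpace ℂ E] [CompleteSpace E]
  [NormedAddCommGroup H] [InnerProductSpace ℂ H] [CompleteSpace H]

/-- The operator `G := (−D₀)*`. -/
def Gop (D₀ : H →ₗ.[ℂ] E) : E →ₗ.[ℂ] H := (-D₀).adjoint

/-- The operator `D := −(G₀)*`. -/
def Dop (G₀ : E →ₗ.[ℂ] H) : H →ₗ.[ℂ] E := -(G₀.adjoint)

/-- Pointwise application of `G`, defined to be `0` off the domain. -/
def Gap (D₀ : H →ₗ.[ℂ] E) (u : E) : H :=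
  if h : u ∈ (Gop D₀).domain then Gop D₀ ⟨u, h⟩ else 0

/-- Pointwise application of `D`, defined to be `0` off the domain. -/
def Dap (G₀ : E →ₗ.[ℂ] H) (w : H) : E :=
  if h : w ∈ (Dop G₀).domain then Dop G₀ ⟨w, h⟩ else 0

/-- The graph inner product of `D_G`: `⟪x,y⟫_E + ⟪Gx,Gy⟫_H`. -/
def innG (D₀ : H →ₗ.[ℂ] E) (x y : E) : ℂ := ⟪x, y⟫ + ⟪Gap D₀ x, Gap D₀ y⟫

/-- The graph inner product of `D_D`: `⟪x,y⟫_H + ⟪Dx,Dy⟫_E`. -/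
def innD (G₀ : E →ₗ.[ℂ] H) (x y : H) : ℂ := ⟪x, y⟫ + ⟪Dap G₀ x, Dap G₀ y⟫

/-- The boundary data space `BD(G)`, the orthogonal complement of `D(G₀)` in `D_G`. -/
def BDG (G₀ : E →ₗ.[ℂ] H) (D₀ : H →ₗ.[ℂ] E) : Set E :=
  {u | u ∈ (Gop D₀).domain ∧ ∀ v ∈ G₀.domain, innG D₀ u v = 0}

/-- The boundary data space `BD(D)`, the orthogonal complement of `D(D₀)` in `D_D`. -/
def BDD (G₀ : E →ₗ.[ℂ] H) (D₀ : H →ₗ.[ℂ] E) : Set H :=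
  {w | w ∈ (Dop G₀).domain ∧ ∀ v ∈ D₀.domain, innD G₀ w v = 0}

/-- Monotonicity of a relation on the Hilbert space `E ⊕ H` (the real part of the inner
product of `E ⊕ H` is the sum of the real parts of the component inner products). -/
def IsMonotoneRelProd (C : Set ((E × H) × (E × H))) : Prop :=
  ∀ p ∈ C, ∀ q ∈ C,
    0 ≤ ((⟪p.1.1 - q.1.1, p.2.1 - q.2.1⟫ : ℂ) + ⟪p.1.2 - q.1.2, p.2.2 - q.2.2⟫).re

/-- Maximal monotonicity of a relation on `E ⊕ H`. -/
def IsMaximalMonotoneRelProd (C : Set ((E × H) × (E × H))) : Prop :=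
  IsMonotoneRelProd C ∧
    ∀ B : Set ((E × H) × (E × H)), IsMonotoneRelProd B → C ⊆ B → B = C

/-- Monotonicity of a relation on `BD(G)` with respect to the graph inner product. -/
def IsMonotoneBDG (D₀ : H →ₗ.[ℂ] E) (h : Set (E × E)) : Prop :=
  ∀ p ∈ h, ∀ q ∈ h, 0 ≤ (innG D₀ (p.1 - q.1) (p.2 - q.2)).re

/-- Maximal monotonicity of a relation on the Hilbert space `BD(G)` (with the graph inner
product): `h` is monotone and has no proper monotone extension within `BD(G) ⊕ BD(G)`. -/
def IsMaximalMonotoneBDG (G₀ : E →ₗ.[ℂ] H) (D₀ : H →ₗ.[ℂ] E) (h : Set (E × E)) : Prop :=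
  h ⊆ (BDG G₀ D₀) ×ˢ (BDG G₀ D₀) ∧ IsMonotoneBDG D₀ h ∧
    ∀ b : Set (E × E), b ⊆ (BDG G₀ D₀) ×ˢ (BDG G₀ D₀) → IsMonotoneBDG D₀ b → h ⊆ b → b = h

/-!
Since `(-D₀)* = -(D₀*)`, the operator `G` is `Dop D₀`, so `E` and `H` play symmetric roles. The
quadratic form `Re ⟪(u, w), (Dw, Gu)⟫` on `D(G) × D(D)` does not change when elements of `D(G₀)`
and `D(D₀)` are added to `u` and `w`, so it depends only on the boundary data of `u` and `w`. As `D`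
maps `BD(D)` onto `BD(G)` with inverse `G`, it equals `Re ⟪π u, Ḋ π w⟫` in the graph inner product.
The boundary data map is onto, and under a surjection the maximal monotone sets for a pulled back
relation are exactly the preimages of the maximal monotone sets.

It remains to see that a set `M` which is maximal monotone within `D(G) × D(D)` stays maximal among
all relations on `E ⊕ H`. It is invariant under `D(G₀) × D(D₀)`. If `((u, w), (f, g))` is
monotonically related to all of the graph over `M`, this invariance bounds the real parts of two
linear functionals on `D(G₀)` and `D(D₀)` from below. Hence these vanish, which says that `Dw = f`
and `Gu = g`.
-/

section Clique

variable {α β : Type*}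

/-- `C` is a subset of `W` whose elements are pairwise `r`-related. Monotone relations are the
case in which `r p q` says that a quadratic form is nonnegative at `p - q`. -/
def IsCliqueIn (r : α → α → Prop) (W C : Set α) : Prop :=
  C ⊆ W ∧ ∀ a ∈ C, ∀ b ∈ C, r a b

variable {r : α → α → Prop} {s : β → β → Prop} {W C : Set α} {V K : Set β} {f : α → β}

theorem IsCliqueIn.insert [Std.Symm r] (hC : IsCliqueIn r W C) {a : α} (ha : a ∈ W)
    (haa : r a a) (h : ∀ b ∈ C, r a b) : IsCliqueIn r W (insert a C) := by
  refine ⟨Set.insert_subset ha hC.1, ?_⟩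
  rintro _ (rfl | hb) _ (rfl | hc)
  exacts [haa, h _ hc, symm_of r (h _ hb), hC.2 _ hb _ hc]

theorem mem_of_maximal_isCliqueIn [Std.Symm r] (hC : Maximal (IsCliqueIn r W) C) {a : α}
    (ha : a ∈ W) (haa : r a a) (h : ∀ b ∈ C, r a b) : a ∈ C :=
  hC.le_of_ge (hC.prop.insert ha haa h) (Set.subset_insert a C) (Set.mem_insert a C)

theorem IsCliqueIn.image (hf : Set.MapsTo f W V)
    (hrs : ∀ a ∈ W, ∀ b ∈ W, (r a b ↔ s (f a) (f b))) (hC : IsCliqueIn r W C) :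
    IsCliqueIn s V (f '' C) := by
  refine ⟨(hf.mono_left hC.1).image_subset, ?_⟩
  rintro _ ⟨a, ha, rfl⟩ _ ⟨b, hb, rfl⟩
  exact (hrs a (hC.1 ha) b (hC.1 hb)).1 (hC.2 a ha b hb)

theorem IsCliqueIn.inter_preimage (hrs : ∀ a ∈ W, ∀ b ∈ W, (r a b ↔ s (f a) (f b)))
    (hK : IsCliqueIn s V K) : IsCliqueIn r W (W ∩ f ⁻¹' K) :=
  ⟨Set.inter_subset_left, fun a ha b hb => (hrs a ha.1 b hb.1).2 (hK.2 _ ha.2 _ hb.2)⟩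

theorem maximal_isCliqueIn_iff_exists_preimage (hf : Set.MapsTo f W V) (hf' : Set.SurjOn f W V)
    (hrs : ∀ a ∈ W, ∀ b ∈ W, (r a b ↔ s (f a) (f b))) :
    Maximal (IsCliqueIn r W) C ↔ ∃ K, Maximal (IsCliqueIn s V) K ∧ C = W ∩ f ⁻¹' K := by
  constructor
  · intro hC
    have eq_preimage {K : Set β} (hK : IsCliqueIn s V K) (hCK : f '' C ⊆ K) :
        C = W ∩ f ⁻¹' K :=
      hC.eq_of_le (hK.inter_preimage hrs)
        (Set.subset_inter hC.prop.1 (Set.image_subset_iff.1 hCK))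
    have hfC := hC.prop.image hf hrs
    refine ⟨f '' C, ⟨hfC, fun K hK hCK y hy => ?_⟩, eq_preimage hfC subset_rfl⟩
    obtain ⟨a, ha, rfl⟩ := hf' (hK.1 hy)
    exact Set.mem_image_of_mem f ((eq_preimage hK hCK).ge ⟨ha, hy⟩)
  · rintro ⟨K, hK, rfl⟩
    refine ⟨hK.prop.inter_preimage hrs, fun B hB hKB a ha => ⟨hB.1 ha, ?_⟩⟩
    have hKf : K ⊆ f '' B := fun y hy => by
      obtain ⟨b, hb, rfl⟩ := hf' (hK.prop.1 hy)
      exact Set.mem_image_of_mem f (hKB ⟨hb, hy⟩)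
    exact hK.le_of_ge (hB.image hf hrs) hKf (Set.mem_image_of_mem f ha)

end Clique

section Adjoint

variable {𝕜 X Y : Type*} [RCLike 𝕜] [NormedAddCommGroup X] [InnerProductSpace 𝕜 X]
  [NormedAddCommGroup Y] [InnerProductSpace 𝕜 Y]

theorem linearMap_eq_zero_of_le_re {V : Type*} [AddCommGroup V] [Module 𝕜 V] (φ : V →ₗ[𝕜] 𝕜)
    (c : ℝ) (h : ∀ v, c ≤ RCLike.re (φ v)) : φ = 0 := by
  by_contra hφ
  obtain ⟨v, hv⟩ := DFunLike.ne_iff.1 hφ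
  have hc : φ ((((c - 1 : ℝ) : 𝕜) / φ v) • v) = ((c - 1 : ℝ) : 𝕜) := by
    rw [map_smul, smul_eq_mul, div_mul_cancel₀ _ hv]
  have := h ((((c - 1 : ℝ) : 𝕜) / φ v) • v)
  rw [hc, RCLike.ofReal_re] at this
  linarith

variable [CompleteSpace X] {T : X →ₗ.[𝕜] Y}

theorem mem_adjoint_graph_iff (hT : Dense (T.domain : Set X)) {y : Y} {x : X} :
    (y, x) ∈ T.adjoint.graph ↔ ∀ v : T.domain, inner 𝕜 x (v : X) = inner 𝕜 y (T v) := by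
  constructor
  · intro h v
    obtain ⟨z, rfl, rfl⟩ := (LinearPMap.mem_graph_iff _).1 h
    exact LinearPMap.adjoint_isFormalAdjoint hT z v
  · intro h
    exact (LinearPMap.mem_graph_iff _).2 ⟨⟨y, LinearPMap.mem_adjoint_domain_of_exists y ⟨x, h⟩⟩,
      rfl, LinearPMap.adjoint_apply_eq hT _ h⟩

theorem mem_neg_adjoint_graph_iff (hT : Dense (T.domain : Set X)) {y : Y} {x : X} :
    (y, x) ∈ (-T.adjoint).graph ↔
      ∀ v : T.domain, inner 𝕜 x (v : X) + inner 𝕜 y (T v) = 0 := by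
  have hneg : (y, x) ∈ (-T.adjoint).graph ↔ (y, -x) ∈ T.adjoint.graph := by
    simp [LinearPMap.mem_graph_iff, neg_eq_iff_eq_neg]
  simp only [hneg, mem_adjoint_graph_iff hT, inner_neg_left, neg_eq_iff_add_eq_zero]

theorem neg_adjoint (hT : Dense (T.domain : Set X)) : (-T).adjoint = -T.adjoint := by
  refine LinearPMap.eq_of_eq_graph (Submodule.ext fun ⟨y, x⟩ => ?_)
  rw [mem_neg_adjoint_graph_iff hT, mem_adjoint_graph_iff (T := -T) hT]
  simp only [LinearPMap.neg_apply, inner_neg_right, eq_neg_iff_add_eq_zero]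
  rfl

theorem mem_neg_adjoint_graph_of_re_nonneg (hT : Dense (T.domain : Set X)) {x a : X} {y b : Y}
    (h : ∀ v : T.domain,
      0 ≤ RCLike.re (inner 𝕜 (a - (v : X)) x) + RCLike.re (inner 𝕜 y (b - T v))) :
    (y, x) ∈ (-T.adjoint).graph := by
  let φ : T.domain →ₗ[𝕜] 𝕜 := innerₛₗ 𝕜 x ∘ₗ T.domain.subtype + innerₛₗ 𝕜 y ∘ₗ T.toFun
  have hφ : φ = 0 := by
    refine linearMap_eq_zero_of_le_re φ
      (-(RCLike.re (inner 𝕜 a x) + RCLike.re (inner 𝕜 y b))) fun v => ?_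
    have hv := h (-v)
    rw [LinearPMap.map_neg, Submodule.coe_neg, sub_neg_eq_add, sub_neg_eq_add, inner_add_left,
      inner_add_right, map_add, map_add, inner_re_symm (v : X)] at hv
    change _ ≤ RCLike.re (inner 𝕜 x (v : X) + inner 𝕜 y (T v))
    rw [map_add]
    linarith
  exact (mem_neg_adjoint_graph_iff hT).2 fun v => LinearMap.congr_fun hφ v

end Adjoint

section NegAdjoint

variable {X Y : Type*} [NormedAddCommGroup X] [InnerProductSpace ℂ X] [CompleteSpace X]
  [NormedAddCommGroup Y] [InnerProductSpace ℂ Y] {T : X →ₗ.[ℂ] Y} {S : Y →ₗ.[ℂ] X}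

theorem mem_dop_graph_iff {w : Y} {f : X} :
    (w, f) ∈ (Dop T).graph ↔ w ∈ (Dop T).domain ∧ Dap T w = f := by
  rw [LinearPMap.mem_graph_iff]
  constructor
  · rintro ⟨z, rfl, rfl⟩
    exact ⟨z.2, dif_pos z.2⟩
  · rintro ⟨hw, rfl⟩
    exact ⟨⟨w, hw⟩, rfl, (show Dap T w = Dop T ⟨w, hw⟩ from dif_pos hw).symm⟩

theorem mk_dap_mem_dop_graph {w : Y} (hw : w ∈ (Dop T).domain) : (w, Dap T w) ∈ (Dop T).graph :=
  mem_dop_graph_iff.2 ⟨hw, rfl⟩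

theorem dap_add {w z : Y} (hw : w ∈ (Dop T).domain) (hz : z ∈ (Dop T).domain) :
    Dap T (w + z) = Dap T w + Dap T z :=
  (mem_dop_graph_iff.1 (add_mem (mk_dap_mem_dop_graph hw) (mk_dap_mem_dop_graph hz))).2

theorem dap_sub {w z : Y} (hw : w ∈ (Dop T).domain) (hz : z ∈ (Dop T).domain) :
    Dap T (w - z) = Dap T w - Dap T z :=
  (mem_dop_graph_iff.1 (sub_mem (mk_dap_mem_dop_graph hw) (mk_dap_mem_dop_graph hz))).2

theorem dap_neg (w : Y) : Dap T (-w) = -Dap T w := by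
  by_cases hw : w ∈ (Dop T).domain
  · exact (mem_dop_graph_iff.1 (neg_mem (mk_dap_mem_dop_graph hw))).2
  · simp [Dap, hw]

theorem dap_of_le (hST : S ≤ Dop T) (v : S.domain) : Dap T v = S v :=
  (mem_dop_graph_iff.1 (LinearPMap.le_graph_of_le hST (S.mem_graph v))).2

theorem inner_dap_add_inner_eq_zero (hT : Dense (T.domain : Set X)) {w : Y}
    (hw : w ∈ (Dop T).domain) (v : T.domain) : ⟪Dap T w, (v : X)⟫ + ⟪w, T v⟫ = 0 :=
  (mem_neg_adjoint_graph_iff hT).1 (mk_dap_mem_dop_graph hw) v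

theorem eq_zero_of_mem_BDD_of_mem_domain {z : Y} (hz : z ∈ BDD T S) (hzS : z ∈ S.domain) :
    z = 0 := by
  have h : ‖z‖ ^ 2 + ‖Dap T z‖ ^ 2 = 0 := by
    exact_mod_cast (by simpa [innD, inner_self_eq_norm_sq_to_K] using hz.2 z hzS :
      (‖z‖ : ℂ) ^ 2 + (‖Dap T z‖ : ℂ) ^ 2 = 0)
  exact norm_eq_zero.1 (pow_eq_zero_iff two_ne_zero |>.1 (by nlinarith [sq_nonneg ‖Dap T z‖]))

theorem gop_eq_dop (hT : Dense (T.domain : Set X)) : Gop T = Dop T :=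
  neg_adjoint hT

theorem gap_eq_dap (hT : Dense (T.domain : Set X)) : Gap T = Dap T := by
  unfold Gap Dap
  rw [gop_eq_dop hT]

theorem innG_eq_innD (hT : Dense (T.domain : Set X)) : innG T = innD T := by
  unfold innG innD
  rw [gap_eq_dap hT]

theorem BDG_eq_BDD (hT : Dense (T.domain : Set X)) : BDG S T = BDD T S := by
  unfold BDG BDD
  rw [gop_eq_dop hT, innG_eq_innD hT]

/-- `P` acts on the domain of `Dop T` as the projection onto the boundary data space `BDD T S`
along the domain of `S`, which is the orthogonal projection for the graph inner product. -/
def IsBoundaryProjection (T : X →ₗ.[ℂ] Y) (S : Y →ₗ.[ℂ] X) (P : Y → Y) : Prop :=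
  ∀ w ∈ (Dop T).domain, P w ∈ BDD T S ∧ w - P w ∈ S.domain

/-- Two pairs of boundary data are related if they satisfy the monotonicity inequality of the
graph inner product of `Dop T`. -/
def BoundaryMonotoneRel (T : X →ₗ.[ℂ] Y) (a b : Y × Y) : Prop :=
  0 ≤ (innD T (a.1 - b.1) (a.2 - b.2)).re

theorem isMaximalMonotoneBDG_iff (hT : Dense (T.domain : Set X)) {h : Set (Y × Y)} :
    IsMaximalMonotoneBDG S T h ↔
      Maximal (IsCliqueIn (BoundaryMonotoneRel T) (BDD T S ×ˢ BDD T S)) h := by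
  simp only [IsMaximalMonotoneBDG, IsMonotoneBDG, BDG_eq_BDD hT, innG_eq_innD hT, maximal_iff,
    IsCliqueIn, BoundaryMonotoneRel, and_assoc, and_imp, eq_comm (a := h)]

end NegAdjoint

section BoundaryData

variable {T : E →ₗ.[ℂ] H} {S : H →ₗ.[ℂ] E}

theorem le_dop_symm (hT : Dense (T.domain : Set E)) (hS : Dense (S.domain : Set H))
    (hTS : T ≤ Dop S) : S ≤ Dop T := by
  refine LinearPMap.le_of_le_graph fun ⟨_, f⟩ hf => ?_
  obtain ⟨w, rfl, hw⟩ := (LinearPMap.mem_graph_iff _).1 hf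
  refine (mem_neg_adjoint_graph_iff hT).2 fun v => ?_
  have h := inner_dap_add_inner_eq_zero hS (hTS.1 v.2) w
  rw [dap_of_le hTS, add_comm] at h
  rw [← (show S w = f from hw), ← inner_conj_symm, ← inner_conj_symm (w : H), ← map_add, h,
    map_zero]

theorem mem_BDD_iff (hS : Dense (S.domain : Set H)) (hST : S ≤ Dop T) {z : H} :
    z ∈ BDD T S ↔ z ∈ (Dop T).domain ∧ (Dap T z, z) ∈ (Dop S).graph := by
  refine and_congr_right fun _ => Iff.trans ?_ (mem_neg_adjoint_graph_iff hS).symm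
  simp only [innD, Subtype.forall]
  exact forall₂_congr fun v hv => by rw [dap_of_le hST ⟨v, hv⟩]

theorem dap_dap_of_mem_BDD (hS : Dense (S.domain : Set H)) (hST : S ≤ Dop T) {z : H}
    (hz : z ∈ BDD T S) : Dap S (Dap T z) = z :=
  (mem_dop_graph_iff.1 ((mem_BDD_iff hS hST).1 hz).2).2

theorem dap_mem_BDD (hT : Dense (T.domain : Set E)) (hS : Dense (S.domain : Set H))
    (hTS : T ≤ Dop S) {z : H} (hz : z ∈ BDD T S) : Dap T z ∈ BDD S T := by
  obtain ⟨hzT, hzS⟩ := (mem_BDD_iff hS (le_dop_symm hT hS hTS)).1 hz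
  obtain ⟨hdom, hdap⟩ := mem_dop_graph_iff.1 hzS
  rw [mem_BDD_iff hT hTS, hdap]
  exact ⟨hdom, mk_dap_mem_dop_graph hzT⟩

theorem sub_mem_BDD (hS : Dense (S.domain : Set H)) (hST : S ≤ Dop T) {z z' : H}
    (hz : z ∈ BDD T S) (hz' : z' ∈ BDD T S) : z - z' ∈ BDD T S := by
  rw [mem_BDD_iff hS hST] at hz hz' ⊢
  rw [dap_sub hz.1 hz'.1]
  exact ⟨sub_mem hz.1 hz'.1, sub_mem hz.2 hz'.2⟩

theorem IsBoundaryProjection.apply_of_mem (hS : Dense (S.domain : Set H)) (hST : S ≤ Dop T)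
    {P : H → H} (hP : IsBoundaryProjection T S P) {z : H} (hz : z ∈ BDD T S) : P z = z := by
  obtain ⟨hPz, hsub⟩ := hP z hz.1
  exact (sub_eq_zero.1
    (eq_zero_of_mem_BDD_of_mem_domain (sub_mem_BDD hS hST hz hPz) hsub)).symm

end BoundaryData

section BoundaryForm

/-- The domain `D(G) × D(D)` of the block operator `(0 D; G 0)`, where `D = Dop T` and
`G = Dop S`. -/
abbrev blockDomain (T : E →ₗ.[ℂ] H) (S : H →ₗ.[ℂ] E) : Submodule ℂ (E × H) :=
  (Dop S).domain.prod (Dop T).domain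

/-- The quadratic form `Re ⟪(u, w), (Dw, Gu)⟫` of the block operator `(0 D; G 0)`, where
`D = Dop T` and `G = Dop S`. -/
def boundaryForm (T : E →ₗ.[ℂ] H) (S : H →ₗ.[ℂ] E) (p : E × H) : ℝ :=
  (⟪p.1, Dap T p.2⟫ + ⟪p.2, Dap S p.1⟫).re

/-- Two points of `E × H` are related if the block operator `(0 D; G 0)` is monotone along them. -/
def BlockMonotoneRel (T : E →ₗ.[ℂ] H) (S : H →ₗ.[ℂ] E) (p q : E × H) : Prop :=
  0 ≤ boundaryForm T S (p - q)

/-- The graph of the restriction of the block operator `(0 D; G 0)` to `M`. -/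
def blockGraph (T : E →ₗ.[ℂ] H) (S : H →ₗ.[ℂ] E) (M : Set (E × H)) :
    Set ((E × H) × (E × H)) :=
  {q | q.1 ∈ M ∧ q.2 = (Dap T q.1.2, Dap S q.1.1)}

variable {T : E →ₗ.[ℂ] H} {S : H →ₗ.[ℂ] E} {M : Set (E × H)}

theorem mk_mem_blockGraph {p : E × H} (hp : p ∈ M) :
    (p, (Dap T p.2, Dap S p.1)) ∈ blockGraph T S M :=
  ⟨hp, rfl⟩

theorem boundaryForm_swap (p : E × H) : boundaryForm S T p.swap = boundaryForm T S p :=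
  congrArg Complex.re (add_comm _ _)

theorem boundaryForm_zero : boundaryForm T S 0 = 0 := by
  simp [boundaryForm]

theorem boundaryForm_neg (p : E × H) : boundaryForm T S (-p) = boundaryForm T S p := by
  simp [boundaryForm, dap_neg]

theorem boundaryForm_add_fst (hT : Dense (T.domain : Set E)) (hTS : T ≤ Dop S) {p : E × H}
    (hp : p ∈ blockDomain T S) (v : T.domain) :
    boundaryForm T S (p + ((v : E), 0)) = boundaryForm T S p := by
  have hv := congrArg Complex.re (inner_dap_add_inner_eq_zero hT hp.2 v)
  have hsymm : (⟪(v : E), Dap T p.2⟫ : ℂ).re = (⟪Dap T p.2, (v : E)⟫ : ℂ).re :=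
    inner_re_symm (𝕜 := ℂ) _ _
  simp only [boundaryForm, Prod.fst_add, Prod.snd_add, add_zero, dap_add hp.1 (hTS.1 v.2),
    dap_of_le hTS, inner_add_left, inner_add_right, Complex.add_re, Complex.zero_re] at hv ⊢
  linarith

theorem boundaryForm_add_snd (hS : Dense (S.domain : Set H)) (hST : S ≤ Dop T) {p : E × H}
    (hp : p ∈ blockDomain T S) (v : S.domain) :
    boundaryForm T S (p + (0, (v : H))) = boundaryForm T S p := by
  rw [← boundaryForm_swap, ← boundaryForm_swap p]
  exact boundaryForm_add_fst hS hST (p := p.swap) hp.symm v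

theorem boundaryForm_eq_of_sub_mem (hT : Dense (T.domain : Set E)) (hS : Dense (S.domain : Set H))
    (hTS : T ≤ Dop S) {p q : E × H} (hp : p ∈ blockDomain T S)
    (hpq : q - p ∈ T.domain.prod S.domain) : boundaryForm T S q = boundaryForm T S p := by
  have hp' : p + (q.1 - p.1, 0) ∈ blockDomain T S :=
    add_mem hp ⟨hTS.1 hpq.1, zero_mem _⟩
  calc
    boundaryForm T S q = boundaryForm T S (p + (q.1 - p.1, 0) + (0, q.2 - p.2)) := by
      congr 1; ext <;> simp
    _ = boundaryForm T S (p + (q.1 - p.1, 0)) :=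
      boundaryForm_add_snd hS (le_dop_symm hT hS hTS) hp' ⟨_, hpq.2⟩
    _ = boundaryForm T S p := boundaryForm_add_fst hT hTS hp ⟨_, hpq.1⟩

theorem boundaryForm_of_mem_BDD (hS : Dense (S.domain : Set H)) (hST : S ≤ Dop T) (x : E) {z : H}
    (hz : z ∈ BDD T S) : boundaryForm T S (x, z) = (innD S x (Dap T z)).re := by
  rw [boundaryForm, innD, dap_dap_of_mem_BDD hS hST hz, Complex.add_re, Complex.add_re]
  exact congrArg _ (inner_re_symm (𝕜 := ℂ) _ _)

instance : Std.Symm (BlockMonotoneRel T S) where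
  symm p q h := by rwa [BlockMonotoneRel, ← boundaryForm_neg, neg_sub]

theorem blockMonotoneRel_refl (p : E × H) : BlockMonotoneRel T S p p := by
  rw [BlockMonotoneRel, sub_self, boundaryForm_zero]

theorem blockMonotoneRel_iff_inner {p q : E × H}
    (hp : p ∈ blockDomain T S) (hq : q ∈ blockDomain T S) :
    BlockMonotoneRel T S p q ↔ 0 ≤ (⟪p.1 - q.1, Dap T p.2 - Dap T q.2⟫ +
      ⟪p.2 - q.2, Dap S p.1 - Dap S q.1⟫ : ℂ).re := by
  rw [BlockMonotoneRel, boundaryForm, Prod.fst_sub, Prod.snd_sub, dap_sub hp.1 hq.1,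
    dap_sub hp.2 hq.2]

theorem isMonotoneRelProd_blockGraph_iff (hM : M ⊆ blockDomain T S) :
    IsMonotoneRelProd (blockGraph T S M) ↔
      IsCliqueIn (BlockMonotoneRel T S) (blockDomain T S) M := by
  constructor
  · intro h
    exact ⟨hM, fun p hp q hq => (blockMonotoneRel_iff_inner (hM hp) (hM hq)).2
      (h _ (mk_mem_blockGraph hp) _ (mk_mem_blockGraph hq))⟩
  · rintro ⟨-, h⟩ ⟨p, p'⟩ ⟨hp, hp'⟩ ⟨q, q'⟩ ⟨hq, hq'⟩
    obtain rfl : p' = (Dap T p.2, Dap S p.1) := hp'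
    obtain rfl : q' = (Dap T q.2, Dap S q.1) := hq'
    exact (blockMonotoneRel_iff_inner (hM hp) (hM hq)).1 (h p hp q hq)

theorem add_mem_of_maximal (hT : Dense (T.domain : Set E)) (hS : Dense (S.domain : Set H))
    (hTS : T ≤ Dop S) (hM : Maximal (IsCliqueIn (BlockMonotoneRel T S) (blockDomain T S)) M)
    {p v : E × H} (hp : p ∈ M) (hv : v ∈ T.domain.prod S.domain) : p + v ∈ M := by
  have hvW : v ∈ blockDomain T S := ⟨hTS.1 hv.1, (le_dop_symm hT hS hTS).1 hv.2⟩
  refine mem_of_maximal_isCliqueIn hM (add_mem (hM.prop.1 hp) hvW) (blockMonotoneRel_refl _)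
    fun q hq => ?_
  have hform := boundaryForm_eq_of_sub_mem hT hS hTS (sub_mem (hM.prop.1 hp) (hM.prop.1 hq))
    (q := p + v - q) (by rwa [sub_sub_sub_cancel_right, add_sub_cancel_left])
  rw [BlockMonotoneRel, hform]
  exact hM.prop.2 p hp q hq

theorem nonempty_of_maximal
    (hM : Maximal (IsCliqueIn (BlockMonotoneRel T S) (blockDomain T S)) M) : M.Nonempty := by
  by_contra! hempty
  have hzero : (0 : E × H) ∈ M := by
    refine mem_of_maximal_isCliqueIn hM (zero_mem _) (blockMonotoneRel_refl 0) ?_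
    simp [hempty]
  simp [hempty] at hzero

theorem mem_dop_graph_of_mem_monotone (hT : Dense (T.domain : Set E))
    (hS : Dense (S.domain : Set H)) (hTS : T ≤ Dop S)
    (hM : Maximal (IsCliqueIn (BlockMonotoneRel T S) (blockDomain T S)) M)
    {B : Set ((E × H) × (E × H))} (hB : IsMonotoneRelProd B) (hMB : blockGraph T S M ⊆ B)
    {q : (E × H) × (E × H)} (hq : q ∈ B) :
    (q.1.2, q.2.1) ∈ (Dop T).graph ∧ (q.1.1, q.2.2) ∈ (Dop S).graph := by
  obtain ⟨⟨x, z⟩, hp⟩ := nonempty_of_maximal hM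
  obtain ⟨hx, hz⟩ := hM.prop.1 hp
  have hST := le_dop_symm hT hS hTS
  have related (v : T.domain) (s : S.domain) :
      0 ≤ (⟪q.1.1 - (x + v), q.2.1 - Dap T (z + s)⟫ +
        ⟪q.1.2 - (z + s), q.2.2 - Dap S (x + v)⟫ : ℂ).re :=
    hB q hq _ (hMB (mk_mem_blockGraph
      (add_mem_of_maximal hT hS hTS hM hp (v := (↑v, ↑s)) ⟨v.2, s.2⟩)))
  constructor
  · have h : (q.1.2 - z, q.2.1 - Dap T z) ∈ (Dop T).graph :=
      mem_neg_adjoint_graph_of_re_nonneg hT (a := q.1.1 - x) (b := q.2.2 - Dap S x) fun v => by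
        simpa only [dap_add hx (hTS.1 v.2), dap_of_le hTS, sub_sub, ZeroMemClass.coe_zero, add_zero,
          Complex.add_re, RCLike.re_eq_complex_re] using related v 0
    simpa using add_mem h (mk_dap_mem_dop_graph hz)
  · have h : (q.1.1 - x, q.2.2 - Dap S x) ∈ (Dop S).graph :=
      mem_neg_adjoint_graph_of_re_nonneg hS (a := q.1.2 - z) (b := q.2.1 - Dap T z) fun s => by
        rw [add_comm]
        simpa only [dap_add hz (hST.1 s.2), dap_of_le hST, sub_sub, ZeroMemClass.coe_zero, add_zero,
          Complex.add_re, RCLike.re_eq_complex_re] using related 0 s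
    simpa using add_mem h (mk_dap_mem_dop_graph hx)

theorem isMaximalMonotoneRelProd_blockGraph_iff (hT : Dense (T.domain : Set E))
    (hS : Dense (S.domain : Set H)) (hTS : T ≤ Dop S) (hMW : M ⊆ blockDomain T S) :
    IsMaximalMonotoneRelProd (blockGraph T S M) ↔
      Maximal (IsCliqueIn (BlockMonotoneRel T S) (blockDomain T S)) M := by
  constructor
  · rintro ⟨hmono, hmax⟩
    refine ⟨(isMonotoneRelProd_blockGraph_iff hMW).1 hmono, fun C hC hMC p hp => ?_⟩
    have hgraph := hmax (blockGraph T S C) ((isMonotoneRelProd_blockGraph_iff hC.1).2 hC)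
      fun q hq => ⟨hMC hq.1, hq.2⟩
    exact (hgraph.le (mk_mem_blockGraph hp)).1
  · intro hM
    refine ⟨(isMonotoneRelProd_blockGraph_iff hMW).2 hM.prop, fun B hB hMB => ?_⟩
    refine Set.Subset.antisymm (fun ⟨p, p'⟩ hp => ?_) hMB
    obtain ⟨hD, hG⟩ := mem_dop_graph_of_mem_monotone hT hS hTS hM hB hMB hp
    obtain ⟨hpT, hDp⟩ := mem_dop_graph_iff.1 hD
    obtain ⟨hpS, hGp⟩ := mem_dop_graph_iff.1 hG
    obtain rfl : p' = (Dap T p.2, Dap S p.1) := Prod.ext hDp.symm hGp.symm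
    refine ⟨mem_of_maximal_isCliqueIn hM ⟨hpS, hpT⟩ (blockMonotoneRel_refl p) fun q hq => ?_, rfl⟩
    exact (blockMonotoneRel_iff_inner ⟨hpS, hpT⟩ (hMW hq)).2
      (hB _ hp _ (hMB (mk_mem_blockGraph hq)))

end BoundaryForm

section BoundaryMap

/-- The boundary data `(π_{BD(G)} u, Ḋ π_{BD(D)} w)` of `(u, w)`, for given projections. -/
def boundaryMap (T : E →ₗ.[ℂ] H) (PG : E → E) (PD : H → H) (p : E × H) : E × E :=
  (PG p.1, Dap T (PD p.2))

variable {T : E →ₗ.[ℂ] H} {S : H →ₗ.[ℂ] E} {PG : E → E} {PD : H → H}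

theorem mapsTo_boundaryMap (hT : Dense (T.domain : Set E)) (hS : Dense (S.domain : Set H))
    (hTS : T ≤ Dop S) (hPG : IsBoundaryProjection S T PG) (hPD : IsBoundaryProjection T S PD) :
    Set.MapsTo (boundaryMap T PG PD) (blockDomain T S) (BDD S T ×ˢ BDD S T) :=
  fun p hp => ⟨(hPG p.1 hp.1).1, dap_mem_BDD hT hS hTS (hPD p.2 hp.2).1⟩

theorem surjOn_boundaryMap (hT : Dense (T.domain : Set E)) (hS : Dense (S.domain : Set H))
    (hTS : T ≤ Dop S) (hPG : IsBoundaryProjection S T PG) (hPD : IsBoundaryProjection T S PD) :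
    Set.SurjOn (boundaryMap T PG PD) (blockDomain T S) (BDD S T ×ˢ BDD S T) := by
  rintro ⟨x, y⟩ ⟨hx, hy⟩
  have hST := le_dop_symm hT hS hTS
  have hGy := dap_mem_BDD hS hT hST hy
  refine ⟨(x, Dap S y), ⟨hx.1, hGy.1⟩, Prod.ext (hPG.apply_of_mem hT hTS hx) ?_⟩
  simp only [boundaryMap]
  rw [hPD.apply_of_mem hS hST hGy, dap_dap_of_mem_BDD hT hTS hy]

theorem blockMonotoneRel_iff_boundaryMonotoneRel (hT : Dense (T.domain : Set E))
    (hS : Dense (S.domain : Set H)) (hTS : T ≤ Dop S) (hPG : IsBoundaryProjection S T PG)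
    (hPD : IsBoundaryProjection T S PD) {p q : E × H}
    (hp : p ∈ blockDomain T S) (hq : q ∈ blockDomain T S) :
    BlockMonotoneRel T S p q ↔
      BoundaryMonotoneRel S (boundaryMap T PG PD p) (boundaryMap T PG PD q) := by
  have hST := le_dop_symm hT hS hTS
  obtain ⟨hPGp, hGp⟩ := hPG p.1 hp.1
  obtain ⟨hPGq, hGq⟩ := hPG q.1 hq.1
  obtain ⟨hPDp, hDp⟩ := hPD p.2 hp.2
  obtain ⟨hPDq, hDq⟩ := hPD q.2 hq.2
  have hform : boundaryForm T S (p - q) =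
      (innD S (PG p.1 - PG q.1) (Dap T (PD p.2) - Dap T (PD q.2))).re := by
    rw [← dap_sub hPDp.1 hPDq.1, ← boundaryForm_of_mem_BDD hS hST _ (sub_mem_BDD hS hST hPDp hPDq)]
    refine boundaryForm_eq_of_sub_mem hT hS hTS
      ⟨sub_mem hPGp.1 hPGq.1, sub_mem hPDp.1 hPDq.1⟩ ⟨?_, ?_⟩
    · simpa [sub_sub_sub_comm] using sub_mem hGp hGq
    · simpa [sub_sub_sub_comm] using sub_mem hDp hDq
  rw [BlockMonotoneRel, hform]
  rfl

end BoundaryMap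

/-- **Characterization of maximal monotone restrictions of `(0 D; G 0)`** ([Trostorff 2014,
Thm. 3.1]). Let `M ⊆ D(G) × D(D)` and let `A` be the restriction of the block operator matrix
`(0 D; G 0)` with domain `M`, i.e. `A = {((u,w),(Dw,Gu)) : (u,w) ∈ M}`. Then `A` is maximal
monotone iff there is a maximal monotone relation `h ⊆ BD(G) ⊕ BD(G)` with
`M = {(u,w) ∈ D(G) × D(D) : (π_{BD(G)}u, Ḋπ_{BD(D)}w) ∈ h}`. -/
theorem maximal_monotone_restriction_char (G₀ : E →ₗ.[ℂ] H) (D₀ : H →ₗ.[ℂ] E)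
    (hG₀dense : Dense (G₀.domain : Set E)) (hD₀dense : Dense (D₀.domain : Set H))
    (hG₀closed : G₀.IsClosed) (hD₀closed : D₀.IsClosed)
    (hsub : G₀ ≤ Gop D₀)
    (PG : E → E) (PD : H → H)
    (hPG : ∀ u ∈ (Gop D₀).domain, PG u ∈ BDG G₀ D₀ ∧ u - PG u ∈ G₀.domain)
    (hPD : ∀ w ∈ (Dop G₀).domain, PD w ∈ BDD G₀ D₀ ∧ w - PD w ∈ D₀.domain)
    (M : Set (E × H)) (hM : ∀ p ∈ M, p.1 ∈ (Gop D₀).domain ∧ p.2 ∈ (Dop G₀).domain) :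
    IsMaximalMonotoneRelProd
        {q : (E × H) × (E × H) | q.1 ∈ M ∧ q.2 = (Dap G₀ q.1.2, Gap D₀ q.1.1)} ↔
      ∃ hrel : Set (E × E), IsMaximalMonotoneBDG G₀ D₀ hrel ∧
        M = {p : E × H | p.1 ∈ (Gop D₀).domain ∧ p.2 ∈ (Dop G₀).domain ∧
          (PG p.1, Dap G₀ (PD p.2)) ∈ hrel} := by
  have hTS : G₀ ≤ Dop D₀ := gop_eq_dop hD₀dense ▸ hsub
  simp only [gop_eq_dop hD₀dense, BDG_eq_BDD hD₀dense] at hPG hM ⊢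
  rw [gap_eq_dap hD₀dense]
  change IsMaximalMonotoneRelProd (blockGraph G₀ D₀ M) ↔ _
  rw [isMaximalMonotoneRelProd_blockGraph_iff hG₀dense hD₀dense hTS hM,
    maximal_isCliqueIn_iff_exists_preimage (mapsTo_boundaryMap hG₀dense hD₀dense hTS hPG hPD)
      (surjOn_boundaryMap hG₀dense hD₀dense hTS hPG hPD) fun p hp q hq =>
        blockMonotoneRel_iff_boundaryMonotoneRel hG₀dense hD₀dense hTS hPG hPD hp hq]
  simp only [isMaximalMonotoneBDG_iff hD₀dense, Set.ext_iff]
  simp [boundaryMap, and_assoc]
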